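/- Let L be a symmetric positive semidefinite real n×n matrix such that I − L is also positive semidefinite, let P = I − L, and let E(H) = trace(Hᵀ L H). Let λ₀ be a real number with 0 < λ₀ ≤ 1 such that every nonzero eigenvalue of L is at least λ₀. Then for every real n×d matrix X and every natural number l, E(P^l X) ≤ (1 − λ₀)^{2l} · E(X). -/

import Mathlib

open Matrix BigOperators

/-!
The power `P ^ l` is the spectral filter `x ↦ (1 - x) ^ l` applied to `L`, so it commutes with `L`
and the Loewner inequality `P ^ l * L * P ^ l ≤ ρ ^ (2 * l) • L`, with `ρ = 1 - λ₀`, can be checked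
eigenvalue by eigenvalue: the eigenvalue `0` contributes nothing to either side, and every other
eigenvalue `μ` is positive with `|1 - μ| ≤ ρ`. Conjugating by `X` and taking traces preserves the
Loewner order.
-/

open scoped ComplexOrder MatrixOrder

lemma abs_one_sub_le_of_mem_spectrum {A : Type*} [Ring A] [PartialOrder A] [IsOrderedAddMonoid A]
    [Algebra ℝ A] [NonnegSpectrumClass ℝ A] {a : A} (ha : a ≤ 1) {r μ : ℝ}
    (hμ : μ ∈ spectrum ℝ a) (hr : r ≤ μ) : |1 - μ| ≤ 1 - r := by
  have hmem : 1 - μ ∈ spectrum ℝ (1 - a) := by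
    rw [← map_one (algebraMap ℝ A), ← spectrum.singleton_sub_eq]
    exact Set.sub_mem_sub rfl hμ
  rw [abs_of_nonneg (spectrum_nonneg_of_nonneg (sub_nonneg.2 ha) hmem)]
  exact sub_le_sub_left hr 1

section SpectralFilter

variable {A : Type*} [Ring A] [StarRing A] [TopologicalSpace A] [Algebra ℝ A]
  [ContinuousFunctionalCalculus ℝ A IsSelfAdjoint]

lemma cfc_one_sub_pow {a : A} (ha : IsSelfAdjoint a) (l : ℕ) :
    cfc (fun x : ℝ ↦ (1 - x) ^ l) a = (1 - a) ^ l := by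
  rw [cfc_pow (fun x : ℝ ↦ 1 - x) l a, cfc_sub (fun _ : ℝ ↦ 1) (fun x ↦ x) a,
    cfc_const_one ℝ a, cfc_id' ℝ a]

lemma cfc_mul_self_mul_cfc_le [PartialOrder A] [StarOrderedRing A] {a : A} (ha : IsSelfAdjoint a)
    {f : ℝ → ℝ} (hf : ContinuousOn f (spectrum ℝ a)) {c : ℝ}
    (hfc : ∀ x ∈ spectrum ℝ a, f x ^ 2 * x ≤ c * x) :
    cfc f a * a * cfc f a ≤ c • a :=
  calc cfc f a * a * cfc f a
      = cfc (fun x ↦ f x * x * f x) a := by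
        rw [cfc_mul (fun x ↦ f x * x) f a, cfc_mul f (fun x ↦ x) a, cfc_id' ℝ a]
    _ ≤ cfc (fun x ↦ c * x) a :=
        cfc_mono fun x hx ↦ by linarith [hfc x hx]
    _ = c • a := cfc_const_mul_id c a

end SpectralFilter

section DirichletEnergy

variable {𝕜 n d : Type*} [RCLike 𝕜] [Fintype n] [Fintype d]

/-- The Dirichlet energy `trace (Xᴴ L X)` of the signals given by the columns of `X`, for a
Laplacian `L`. It takes values in `𝕜`, where inequalities refer to the order of `ComplexOrder`. -/
def dirichletEnergy (L : Matrix n n 𝕜) (X : Matrix n d 𝕜) : 𝕜 :=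
  (Xᴴ * L * X).trace

lemma dirichletEnergy_mono {L M : Matrix n n 𝕜} (hLM : L ≤ M) (X : Matrix n d 𝕜) :
    dirichletEnergy L X ≤ dirichletEnergy M X := by
  have h : 0 ≤ (Xᴴ * (M - L) * X).trace := (hLM.conjTranspose_mul_mul_same X).trace_nonneg
  rwa [Matrix.mul_sub, Matrix.sub_mul, trace_sub, sub_nonneg] at h

lemma dirichletEnergy_smul (c : ℝ) (L : Matrix n n 𝕜) (X : Matrix n d 𝕜) :
    dirichletEnergy (c • L) X = c • dirichletEnergy L X := by
  simp only [dirichletEnergy, Matrix.mul_smul, Matrix.smul_mul, trace_smul]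

lemma dirichletEnergy_mul {m : Type*} [Fintype m] (L : Matrix n n 𝕜) (B : Matrix n m 𝕜)
    (X : Matrix m d 𝕜) :
    dirichletEnergy L (B * X) = dirichletEnergy (Bᴴ * L * B) X := by
  simp only [dirichletEnergy, conjTranspose_mul, Matrix.mul_assoc]

variable [DecidableEq n]

lemma dirichletEnergy_cfc_mul_le {L : Matrix n n 𝕜} (hL : L.IsHermitian) {f : ℝ → ℝ} {c : ℝ}
    (hfc : ∀ μ ∈ spectrum ℝ L, f μ ^ 2 * μ ≤ c * μ) (X : Matrix n d 𝕜) :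
    dirichletEnergy L (cfc f L * X) ≤ c • dirichletEnergy L X := by
  have hf : ContinuousOn f (spectrum ℝ L) := L.finite_real_spectrum.continuousOn f
  have hstar : (cfc f L)ᴴ = cfc f L := IsSelfAdjoint.cfc
  rw [dirichletEnergy_mul, hstar, ← dirichletEnergy_smul]
  exact dirichletEnergy_mono (cfc_mul_self_mul_cfc_le hL hf hfc) X

theorem energy_propagated_le_general {L : Matrix n n 𝕜} (hL : L.PosSemidef) {ρ : ℝ}
    (hρ : ∀ μ ∈ spectrum ℝ L, μ ≠ 0 → |1 - μ| ≤ ρ) (X : Matrix n d 𝕜) (l : ℕ) :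
    dirichletEnergy L ((1 - L) ^ l * X) ≤ ρ ^ (2 * l) • dirichletEnergy L X := by
  rw [← cfc_one_sub_pow hL.isHermitian]
  refine dirichletEnergy_cfc_mul_le hL.isHermitian (fun μ hμ ↦ ?_) X
  obtain rfl | hμ0 := eq_or_ne μ 0
  · simp only [mul_zero, le_refl]
  have hμ_nonneg : 0 ≤ μ := spectrum_nonneg_of_nonneg hL.nonneg hμ
  have hpow : ((1 - μ) ^ l) ^ 2 ≤ ρ ^ (2 * l) :=
    calc ((1 - μ) ^ l) ^ 2 = |1 - μ| ^ (2 * l) := by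
          rw [pow_right_comm, pow_mul, sq_abs]
      _ ≤ ρ ^ (2 * l) := pow_le_pow_left₀ (abs_nonneg _) (hρ μ hμ hμ0) _
  exact mul_le_mul_of_nonneg_right hpow hμ_nonneg

end DirichletEnergy

/-- `E(P^l X) ≤ (1 − λ₀)^{2l} E(X)` where `P = I − L`, `L` and `I − L` are PSD,
and every nonzero eigenvalue of `L` is at least `λ₀ ∈ (0,1]`. -/
theorem energy_propagated_le (n d : ℕ) (L : Matrix (Fin n) (Fin n) ℝ)
    (hL : L.PosSemidef) (hIL : ((1 : Matrix (Fin n) (Fin n) ℝ) - L).PosSemidef)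
    (P : Matrix (Fin n) (Fin n) ℝ) (hP : P = 1 - L)
    (lam0 : ℝ) (hlam0 : 0 < lam0) (hlam1 : lam0 ≤ 1)
    (hspec : ∀ μ ∈ spectrum ℝ L, μ ≠ 0 → lam0 ≤ μ)
    (X : Matrix (Fin n) (Fin d) ℝ) (l : ℕ) :
    ((P ^ l * X)ᵀ * L * (P ^ l * X)).trace ≤
      (1 - lam0) ^ (2 * l) * (Xᵀ * L * X).trace := by
  subst hP
  exact energy_propagated_le_general hL
    (fun _ hμ hμ0 ↦ abs_one_sub_le_of_mem_spectrum hIL hμ (hspec _ hμ hμ0)) X l
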